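/- Let w ∈ S_n have full support. Suppose that for every left descent s of w, either s does not lie in the support of sw, or sw = ws; and for every right descent s of w, either s does not lie in the support of ws, or sw = ws. Then w is a Coxeter element of S_n. -/

import Mathlib

/-- The support of `w`: the set of simple reflection indices appearing in some
(equivalently, any) reduced word for `w`. -/
def CoxeterSystem.supp {B W : Type*} [Group W] {M : CoxeterMatrix B}
    (cs : CoxeterSystem M W) (w : W) : Set B :=
  { i | ∃ ω : List B, cs.IsReduced ω ∧ cs.wordProd ω = w ∧ i ∈ ω }

/-!
Let `S_{m+1}` act on `ℕ` by adjacent swaps. A generator `s_i` lies outside the support of `w`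
exactly when `w` maps `{0, …, i}` to itself, so full support says that every cut between `i` and
`i + 1` is crossed by some `p ≤ i < w p`. If `s_i` is a right descent, the hypothesis says that
either `w s_i` respects the cut, whence `i` is the only point crossing it, or `w` exchanges `i` and
`i + 1`.

An interior point that is fixed or exchanged with its successor would, at its smallest occurrence,
force two points to cross the same cut and then a descent whose cut both still cross. So the cut at
every descent is crossed only once. A doubly crossed cut would then make the next cut doubly crossed
as well, all the way past `m`; hence every cut is crossed exactly once. In a permutation with this
property and without interior fixed points, the last letter `s_{m-1}` can be split off on the left
or on the right, and induction writes the permutation as a product of distinct generators.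
-/

open Equiv MulAction

section AdjacentSwaps

open scoped Pointwise

/-- The adjacent transposition `s_i = (i, i + 1)`, acting on all of `ℕ`. -/
abbrev adjSwap (i : ℕ) : Perm ℕ := swap i (i + 1)

/-- The permutations that respect the cut between `i` and `i + 1`. Its finitary part is the
parabolic subgroup generated by the `s_j` with `j ≠ i`. -/
abbrev cutStabilizer (i : ℕ) : Subgroup (Perm ℕ) := stabilizer (Perm ℕ) (Set.Iic i)

theorem adjSwap_apply (i x : ℕ) :
    adjSwap i x = if x = i then i + 1 else if x = i + 1 then i else x :=
  swap_apply_def i (i + 1) x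

theorem eq_of_adjSwap_apply_lt {i x y : ℕ} (hxy : x < y) (h : adjSwap i y < adjSwap i x) :
    x = i ∧ y = i + 1 := by
  simp only [adjSwap_apply] at h
  grind

theorem mem_cutStabilizer {f : Perm ℕ} {i : ℕ} :
    f ∈ cutStabilizer i ↔ ∀ x ≤ i, f x ≤ i := by
  rw [mem_stabilizer_set_iff_smul_set_subset (Set.finite_Iic i), Set.smul_set_subset_iff]
  rfl

theorem apply_le_iff_of_mem_cutStabilizer {f : Perm ℕ} {i : ℕ} (hf : f ∈ cutStabilizer i) (x : ℕ) :
    f x ≤ i ↔ x ≤ i :=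
  mem_stabilizer_set.1 hf x

theorem adjSwap_mem_cutStabilizer {i j : ℕ} (h : j ≠ i) : adjSwap j ∈ cutStabilizer i := by
  rw [mem_cutStabilizer]
  intro x hx
  rw [adjSwap_apply]
  grind

theorem apply_le_of_fixed_above {f : Perm ℕ} {m x : ℕ} (hfix : ∀ y, m < y → f y = y)
    (hx : x ≤ m) : f x ≤ m := by
  by_contra! h
  have : f x = x := f.injective (hfix _ h)
  omega

theorem exists_descent_between {α : Type*} [LinearOrder α] (f : ℕ → α) {a b : ℕ}
    (hab : a ≤ b) (h : f b < f a) : ∃ k, a ≤ k ∧ k < b ∧ f (k + 1) < f k := by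
  by_contra! hasc
  have hmono : MonotoneOn f (Set.Icc a b) :=
    monotoneOn_of_le_add_one Set.ordConnected_Icc fun k _ hk hk' =>
      hasc k hk.1 (Nat.lt_of_succ_le hk'.2)
  exact h.not_ge (hmono (Set.left_mem_Icc.2 hab) (Set.right_mem_Icc.2 hab) hab)

end AdjacentSwaps

section RigidDescents

variable {f : Perm ℕ} {m i j : ℕ}

/-- The condition of the theorem on right descents, for a permutation of `ℕ` in one-line notation.
The condition on left descents is the same condition on the inverse. -/
def HasRigidDescents (f : Perm ℕ) : Prop :=
  ∀ j, f (j + 1) < f j → f * adjSwap j ∈ cutStabilizer j ∨ Commute (adjSwap j) f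

/-- The point `j` is fixed by `f` or exchanged by `f` with its successor. Excluding both
possibilities together is what makes the induction on `j` work. -/
def IsFixedOrExchanged (f : Perm ℕ) (j : ℕ) : Prop :=
  f j = j ∨ f j = j + 1 ∧ f (j + 1) = j

/-- At least two points `p < q` move from the left of the cut between `i` and `i + 1` to its
right. -/
def CrossedTwice (f : Perm ℕ) (i : ℕ) : Prop :=
  ∃ p q, p < q ∧ q ≤ i ∧ i < f p ∧ i < f q

theorem exchange_of_commute_adjSwap (h : Commute (adjSwap j) f) (hj : f (j + 1) < f j) :
    f j = j + 1 ∧ f (j + 1) = j := by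
  have hswap : adjSwap j (f j) = f (j + 1) := by
    simpa using congrArg (· j) h.eq
  rw [adjSwap_apply] at hswap
  grind

theorem crossing_or_exchange_of_descent (hf : HasRigidDescents f) (hj : f (j + 1) < f j) :
    (f (j + 1) ≤ j ∧ ∀ p < j, f p ≤ j) ∨ (f j = j + 1 ∧ f (j + 1) = j) := by
  refine (hf j hj).imp (fun h => ?_) (fun h => exchange_of_commute_adjSwap h hj)
  rw [mem_cutStabilizer] at h
  refine ⟨by simpa using h j le_rfl, fun p hp => ?_⟩
  simpa [swap_apply_of_ne_of_ne hp.ne (show p ≠ j + 1 by omega)] using h p hp.le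

theorem IsFixedOrExchanged.inv (h : IsFixedOrExchanged f j) : IsFixedOrExchanged f⁻¹ j := by
  simp only [IsFixedOrExchanged, Perm.inv_eq_iff_eq] at h ⊢
  grind

theorem apply_lt_self_of_isFixedOrExchanged_succ (hf : HasRigidDescents f)
    (hsucc : IsFixedOrExchanged f (j + 1)) (hj : f j ≠ j) : f j < j := by
  have hasc : ¬ f (j + 1) < f j := fun hdesc => by
    have := crossing_or_exchange_of_descent hf hdesc
    unfold IsFixedOrExchanged at hsucc
    omega
  have hne₁ : f j ≠ f (j + 1) := f.injective.ne (by omega)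
  have hne₂ : f j ≠ f (j + 1 + 1) := f.injective.ne (by omega)
  rcases hsucc with hfix | ⟨hup, hdown⟩ <;> omega

theorem exists_exchange_of_crossings (hf : HasRigidDescents f) {p q : ℕ} (hpq : p ≠ q)
    (hp : p < j) (hq : q < j) (hfp : j ≤ f p) (hfq : j ≤ f q) (hj : f j < j) :
    ∃ k, 0 < k ∧ k < j ∧ f k = k + 1 ∧ f (k + 1) = k := by
  have hmax : f j < f (max p q) := by
    rcases max_choice p q with h | h <;> rw [h] <;> omega
  obtain ⟨k, hk, hkj, hdesc⟩ := exists_descent_between f (by omega) hmax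
  rcases crossing_or_exchange_of_descent hf hdesc with ⟨_, honly⟩ | hexch
  · have hpk : ¬ p < k := fun h => by have := honly p h; omega
    have hqk : ¬ q < k := fun h => by have := honly q h; omega
    omega
  · exact ⟨k, by omega, hkj, hexch⟩

theorem not_isFixedOrExchanged (hf : HasRigidDescents f) (hf' : HasRigidDescents f⁻¹)
    (hcross : ∀ i < m, ∃ p ≤ i, i < f p) (hi₀ : 0 < i) (him : i < m) :
    ¬ IsFixedOrExchanged f i := by
  induction i using Nat.strong_induction_on with
  | _ i ih =>
  intro hi
  obtain ⟨j, rfl⟩ : ∃ j, i = j + 1 := ⟨i - 1, by omega⟩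
  have hj : f j ≠ j := by
    rcases Nat.eq_zero_or_pos j with rfl | hj₀
    · obtain ⟨p, hp, hfp⟩ := hcross 0 (by omega)
      obtain rfl : p = 0 := by omega
      exact hfp.ne'
    · exact fun h => ih j (by omega) hj₀ (by omega) (Or.inl h)
  have hfj : f j < j := apply_lt_self_of_isFixedOrExchanged_succ hf hi hj
  obtain ⟨p, hp, hpj⟩ : ∃ p, f p = j ∧ p < j :=
    ⟨f⁻¹ j, (Perm.eq_inv_iff_eq).1 rfl, apply_lt_self_of_isFixedOrExchanged_succ hf' hi.inv
      fun h => hj (Perm.inv_eq_iff_eq.1 h).symm⟩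
  obtain ⟨q, hqj, hq⟩ := hcross j (by omega)
  have hqj' : q ≠ j := by rintro rfl; omega
  have hpq : p ≠ q := by rintro rfl; omega
  obtain ⟨k, hk₀, hkj, hexch⟩ :=
    exists_exchange_of_crossings hf hpq hpj (by omega) hp.ge hq.le hfj
  exact ih k (by omega) hk₀ (by omega) (Or.inr hexch)

theorem CrossedTwice.succ (hdesc : ∀ j, f (j + 1) < f j → ∀ p < j, f p ≤ j)
    (h : CrossedTwice f i) : CrossedTwice f (i + 1) := by
  obtain ⟨p, q, hpq, hqi, hp, hq⟩ := h
  have hi : i < f i := by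
    by_contra! hi
    obtain ⟨k, hqk, hki, hk⟩ := exists_descent_between f hqi (by omega)
    have := hdesc k hk p (by omega)
    omega
  have hasc : ¬ f (i + 1) < f i := fun hd => by
    have := hdesc i hd p (by omega)
    omega
  have hne : f i ≠ f (i + 1) := f.injective.ne (by omega)
  have hne' : f p ≠ f i := f.injective.ne (by omega)
  by_cases hp' : f p = i + 1
  · exact ⟨i, i + 1, by omega, le_rfl, by omega, by omega⟩
  · exact ⟨p, i + 1, by omega, le_rfl, by omega, by omega⟩

theorem not_crossedTwice (hfix : ∀ x, m < x → f x = x)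
    (hdesc : ∀ j, f (j + 1) < f j → ∀ p < j, f p ≤ j) : ¬ CrossedTwice f i := by
  intro h
  obtain ⟨p, q, hpq, hq, hp, -⟩ : CrossedTwice f (max i m) :=
    Nat.le_induction h (fun _ _ h => h.succ hdesc) _ (le_max_left i m)
  have : f p = p := f.injective (hfix (f p) (by omega))
  omega

end RigidDescents

section CoxeterPattern

variable {f : Perm ℕ} {m k : ℕ}

/-- The shape in one-line notation of the Coxeter elements of the symmetric group on
`{0, …, m}`. -/
structure IsCoxeterPattern (m : ℕ) (f : Perm ℕ) : Prop where
  apply_of_lt : ∀ x, m < x → f x = x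
  existsUnique_crossing : ∀ i < m, ∃! p, p ≤ i ∧ i < f p
  apply_ne : ∀ x, 0 < x → x < m → f x ≠ x

theorem isCoxeterPattern_of_hasRigidDescents (hf : HasRigidDescents f)
    (hf' : HasRigidDescents f⁻¹) (hfix : ∀ x, m < x → f x = x)
    (hcross : ∀ i < m, ∃ p ≤ i, i < f p) : IsCoxeterPattern m f := by
  have hinterior : ∀ i, 0 < i → i < m → ¬ IsFixedOrExchanged f i := fun i =>
    not_isFixedOrExchanged hf hf' hcross
  have hdesc : ∀ j, f (j + 1) < f j → ∀ p < j, f p ≤ j := by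
    intro j hj p hp
    rcases crossing_or_exchange_of_descent hf hj with ⟨_, h⟩ | h
    · exact h p hp
    · have hjm : j < m := by
        by_contra! hmj
        have := hfix (j + 1) (by omega)
        omega
      exact absurd (Or.inr h) (hinterior j (by omega) hjm)
  refine ⟨hfix, fun i hi => ?_, fun x hx₀ hxm h => hinterior x hx₀ hxm (Or.inl h)⟩
  obtain ⟨p, hpi, hp⟩ := hcross i hi
  refine ⟨p, ⟨hpi, hp⟩, fun q ⟨hqi, hq⟩ => ?_⟩
  have htwice : ¬ CrossedTwice f i := not_crossedTwice hfix hdesc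
  rcases lt_trichotomy q p with h | h | h
  · exact absurd ⟨q, p, h, hpi, hq, hp⟩ htwice
  · exact h
  · exact absurd ⟨p, q, h, hqi, hp, hq⟩ htwice

namespace IsCoxeterPattern

theorem eq_one (hf : IsCoxeterPattern 0 f) : f = 1 := by
  ext x
  rcases Nat.eq_zero_or_pos x with rfl | hx
  · exact Nat.le_zero.1 (apply_le_of_fixed_above hf.apply_of_lt le_rfl)
  · exact hf.apply_of_lt x hx

theorem apply_last_or (hf : IsCoxeterPattern (k + 1) f) : f k = k + 1 ∨ f (k + 1) = k := by
  by_contra! ⟨hk, hk'⟩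
  have hle : ∀ x ≤ k + 1, f x ≤ k + 1 := fun x => apply_le_of_fixed_above hf.apply_of_lt
  obtain ⟨y, ⟨hyk, hy⟩, -⟩ := hf.existsUnique_crossing k (by omega)
  have hfy : f y = k + 1 := le_antisymm (hle y (by omega)) hy
  have hyk' : y ≠ k := by rintro rfl; exact hk hfy
  obtain ⟨x, hx⟩ := f.surjective k
  have hxle : x ≤ k + 1 := by
    by_contra! h
    have := hf.apply_of_lt x h
    omega
  have hxk : x ≠ k := by rintro rfl; exact hf.apply_ne x (by omega) (by omega) hx
  have hxk' : x ≠ k + 1 := by rintro rfl; exact hk' hx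
  obtain rfl : x = y := (hf.existsUnique_crossing (k - 1) (by omega)).unique
    ⟨by omega, by omega⟩ ⟨by omega, by omega⟩
  omega

theorem mul_adjSwap (hf : IsCoxeterPattern (k + 1) f) (hk : f k = k + 1) :
    IsCoxeterPattern k (f * adjSwap k) := by
  have hlow : ∀ x < k, (f * adjSwap k) x = f x := fun x hx => by
    rw [Perm.mul_apply, swap_apply_of_ne_of_ne (by omega) (by omega)]
  refine ⟨fun x hx => ?_, fun i hi => ?_, fun x hx₀ hxk => ?_⟩
  · rcases Nat.lt_or_eq_of_le hx with hx' | rfl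
    · rw [Perm.mul_apply, swap_apply_of_ne_of_ne (by omega) (by omega), hf.apply_of_lt x hx']
    · rw [Perm.mul_apply, swap_apply_right, hk]
  · refine (existsUnique_congr fun p => and_congr_right fun hp => ?_).2
      (hf.existsUnique_crossing i (by omega))
    rw [hlow p (by omega)]
  · rw [hlow x hxk]
    exact hf.apply_ne x hx₀ (by omega)

theorem adjSwap_mul (hf : IsCoxeterPattern (k + 1) f) (hk : f (k + 1) = k) :
    IsCoxeterPattern k (adjSwap k * f) := by
  have hne : ∀ x, x ≠ k + 1 → f x ≠ k := fun x hx h => hx (f.injective (h.trans hk.symm))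
  have hval : ∀ x, x ≠ k + 1 → (adjSwap k * f) x = if f x = k + 1 then k else f x := fun x hx => by
    rw [Perm.mul_apply, adjSwap_apply, if_neg (hne x hx)]
  refine ⟨fun x hx => ?_, fun i hi => ?_, fun x hx₀ hxk => ?_⟩
  · rcases Nat.lt_or_eq_of_le hx with hx' | rfl
    · have := hf.apply_of_lt x hx'
      rw [hval x (by omega), if_neg (by omega), this]
    · rw [Perm.mul_apply, hk, swap_apply_left]
  · refine (existsUnique_congr fun p => and_congr_right fun hp => ?_).2
      (hf.existsUnique_crossing i (by omega))
    rw [hval p (by omega)]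
    split_ifs <;> omega
  · have := hf.apply_ne x hx₀ (by omega)
    rw [hval x (by omega)]
    split_ifs <;> omega

theorem exists_perm_range_prod_eq (hf : IsCoxeterPattern m f) :
    ∃ ω : List ℕ, ω.Perm (List.range m) ∧ (ω.map adjSwap).prod = f := by
  induction m generalizing f with
  | zero => exact ⟨[], .refl _, by simp [hf.eq_one]⟩
  | succ k ih =>
    rw [List.range_succ]
    rcases hf.apply_last_or with hk | hk
    · obtain ⟨ω, hω, hprod⟩ := ih (hf.mul_adjSwap hk)
      refine ⟨ω ++ [k], hω.append_right [k], ?_⟩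
      rw [List.map_append, List.prod_append, hprod, List.map_singleton, List.prod_singleton,
        mul_assoc, swap_mul_self, mul_one]
    · obtain ⟨ω, hω, hprod⟩ := ih (hf.adjSwap_mul hk)
      refine ⟨k :: ω, (hω.cons k).trans (List.perm_append_singleton k _).symm, ?_⟩
      rw [List.map_cons, List.prod_cons, hprod, ← mul_assoc, swap_mul_self, one_mul]

end IsCoxeterPattern

end CoxeterPattern

section Representation

theorem supp_inv {B W : Type*} [Group W] {M : CoxeterMatrix B} (cs : CoxeterSystem M W) (w : W) :
    cs.supp w⁻¹ = cs.supp w := by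
  have hsub : ∀ v, cs.supp v ⊆ cs.supp v⁻¹ := by
    rintro _ i ⟨ω, hω, rfl, hi⟩
    exact ⟨ω.reverse, hω.reverse, cs.wordProd_reverse ω, List.mem_reverse.2 hi⟩
  exact (inv_inv w ▸ hsub w⁻¹).antisymm (hsub w)

variable {m : ℕ} {W : Type*} [Group W] {M : CoxeterMatrix (Fin m)}

/-- A faithful action of a Coxeter group on `ℕ` in which the `i`-th simple reflection acts as
`(i, i + 1)`. Working on `ℕ` rather than on `Fin (m + 1)` avoids the two embeddings of `Fin m`. -/
structure IsAdjacentSwapRep (cs : CoxeterSystem M W) (φ : W →* Perm ℕ) : Prop where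
  injective : Function.Injective φ
  map_simple : ∀ i : Fin m, φ (cs.simple i) = adjSwap i

theorem viaEmbedding_swap {α β : Type*} [DecidableEq α] [DecidableEq β] (ι : α ↪ β) (a b : α) :
    (swap a b).viaEmbedding ι = swap (ι a) (ι b) := by
  ext y
  by_cases hy : y ∈ Set.range ι
  · obtain ⟨x, rfl⟩ := hy
    rw [Perm.viaEmbedding_apply, ι.swap_apply]
  · rw [Perm.viaEmbedding_apply_of_notMem _ _ _ hy, swap_apply_of_ne_of_ne] <;>
    · rintro rfl
      exact hy (Set.mem_range_self _)

theorem isAdjacentSwapRep_viaEmbeddingHom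
    (cs : CoxeterSystem M (Perm (Fin (m + 1))))
    (hs : ∀ i : Fin m, cs.simple i = swap i.castSucc i.succ) :
    IsAdjacentSwapRep cs (Perm.viaEmbeddingHom Fin.valEmbedding) where
  injective := Perm.viaEmbeddingHom_injective _
  map_simple i := by
    rw [Perm.viaEmbeddingHom_apply, hs, viaEmbedding_swap]
    rfl

namespace IsAdjacentSwapRep

variable {cs : CoxeterSystem M W} {φ : W →* Perm ℕ} {w : W} {i : Fin m}

theorem map_wordProd (hφ : IsAdjacentSwapRep cs φ) (ω : List (Fin m)) :
    φ (cs.wordProd ω) = ((ω.map Fin.val).map adjSwap).prod := by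
  simp only [CoxeterSystem.wordProd, map_list_prod, List.map_map, Function.comp_def, hφ.map_simple]

theorem apply_of_lt (hφ : IsAdjacentSwapRep cs φ) (w : W) {x : ℕ} (hx : m < x) : φ w x = x := by
  induction w using cs.simple_induction with
  | simple i =>
    rw [hφ.map_simple, swap_apply_of_ne_of_ne (by omega) (by omega)]
  | one => simp
  | mul v w hv hw => rw [map_mul, Perm.mul_apply, hw, hv]

/-- The exchange property: the deleted letter is one that reverses the order of the images of `i`
and `i + 1`. -/
theorem exists_wordProd_eq_mul_simple (hφ : IsAdjacentSwapRep cs φ) (ω : List (Fin m))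
    (h : φ (cs.wordProd ω) (i + 1) < φ (cs.wordProd ω) i) :
    ∃ ω' : List (Fin m), ω'.length + 1 = ω.length ∧
      cs.wordProd ω' = cs.wordProd ω * cs.simple i := by
  induction ω with
  | nil => simp at h
  | cons a ω ih =>
    rw [cs.wordProd_cons] at h ⊢
    set u := cs.wordProd ω
    by_cases hu : φ u (i + 1) < φ u i
    · obtain ⟨ω', hlen, hprod⟩ := ih hu
      exact ⟨a :: ω', by simp [hlen], by rw [cs.wordProd_cons, hprod, mul_assoc]⟩
    · have hlt : φ u i < φ u (i + 1) :=
        lt_of_le_of_ne (not_lt.1 hu) ((φ u).injective.ne (by omega))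
      rw [map_mul, hφ.map_simple, Perm.mul_apply, Perm.mul_apply] at h
      obtain ⟨hi, hi'⟩ := eq_of_adjSwap_apply_lt hlt h
      have hconj : cs.simple a * u = u * cs.simple i := hφ.injective <| by
        rw [map_mul, map_mul, hφ.map_simple, hφ.map_simple, mul_swap_eq_swap_mul, hi, hi']
      exact ⟨ω, rfl, by rw [hconj, cs.simple_mul_simple_cancel_right]⟩

theorem isRightDescent_iff (hφ : IsAdjacentSwapRep cs φ) :
    cs.IsRightDescent w i ↔ φ w (i + 1) < φ w i := by
  have isRightDescent_of_lt : ∀ w, φ w (i + 1) < φ w i → cs.IsRightDescent w i := by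
    intro w h
    obtain ⟨ω, hω, rfl⟩ := cs.exists_isReduced w
    obtain ⟨ω', hlen, hprod⟩ := hφ.exists_wordProd_eq_mul_simple ω h
    rw [CoxeterSystem.IsRightDescent, ← hprod, hω.eq]
    exact (cs.length_wordProd_le ω').trans_lt (by omega)
  refine ⟨fun h => ?_, isRightDescent_of_lt w⟩
  have hmul := mt (isRightDescent_of_lt _) (cs.isRightDescent_iff_not_isRightDescent_mul.1 h)
  simp only [map_mul, hφ.map_simple, Perm.mul_apply, swap_apply_left, swap_apply_right,
    not_lt] at hmul
  exact lt_of_le_of_ne hmul ((φ w).injective.ne (by omega))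

theorem map_wordProd_mem_cutStabilizer (hφ : IsAdjacentSwapRep cs φ) {ω : List (Fin m)}
    (hi : i ∉ ω) : φ (cs.wordProd ω) ∈ cutStabilizer i := by
  rw [hφ.map_wordProd, List.map_map]
  refine Subgroup.list_prod_mem _ fun g hg => ?_
  obtain ⟨j, hj, rfl⟩ := List.mem_map.1 hg
  exact adjSwap_mem_cutStabilizer fun h => hi (Fin.ext h ▸ hj)

theorem notMem_supp_iff (hφ : IsAdjacentSwapRep cs φ) :
    i ∉ cs.supp w ↔ φ w ∈ cutStabilizer i := by
  constructor
  · intro hi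
    obtain ⟨ω, hω, rfl⟩ := cs.exists_isReduced w
    exact hφ.map_wordProd_mem_cutStabilizer fun h => hi ⟨ω, hω, rfl, h⟩
  · rintro hw ⟨ω, hω, rfl, hi⟩
    obtain ⟨ω₁, ω₂, rfl, hω₁⟩ := List.eq_append_cons_of_mem hi
    set u := cs.wordProd (i :: ω₂) with hu
    have hstab : φ u ∈ cutStabilizer i := by
      rw [cs.wordProd_append, map_mul] at hw
      exact (Subgroup.mul_mem_cancel_left _ (hφ.map_wordProd_mem_cutStabilizer hω₁)).1 hw
    have hred : cs.IsReduced (i :: ω₂) := by simpa using hω.drop ω₁.length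
    have hdesc : cs.IsRightDescent u⁻¹ i := by
      rw [cs.isRightDescent_inv_iff, CoxeterSystem.IsLeftDescent, hred.eq, hu, cs.wordProd_cons,
        cs.simple_mul_simple_cancel_left]
      exact Nat.lt_succ_of_le (cs.length_wordProd_le ω₂)
    have hlt := hφ.isRightDescent_iff.1 hdesc
    rw [map_inv] at hlt
    have hcut := apply_le_iff_of_mem_cutStabilizer (inv_mem hstab)
    have hleft := hcut i
    have hright := hcut (i + 1)
    omega

theorem exists_crossing (hφ : IsAdjacentSwapRep cs φ) (hi : i ∈ cs.supp w) :
    ∃ p ≤ (i : ℕ), i < φ w p := by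
  by_contra! h
  exact hφ.notMem_supp_iff.2 (mem_cutStabilizer.2 h) hi

theorem hasRigidDescents (hφ : IsAdjacentSwapRep cs φ)
    (h : ∀ i, cs.IsRightDescent w i →
      i ∉ cs.supp (w * cs.simple i) ∨ Commute (cs.simple i) w) :
    HasRigidDescents (φ w) := by
  intro j hj
  have hjm : j < m := by
    by_contra! hmj
    have hfix := hφ.apply_of_lt w (x := j + 1) (by omega)
    have := apply_le_of_fixed_above (fun y hy => hφ.apply_of_lt w (hmj.trans_lt hy)) le_rfl
    omega
  lift j to Fin m using hjm
  rw [← hφ.map_simple, ← map_mul, ← hφ.notMem_supp_iff]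
  exact (h j (hφ.isRightDescent_iff.2 hj)).imp_right fun hcomm => hcomm.map φ

theorem hasRigidDescents_inv (hφ : IsAdjacentSwapRep cs φ)
    (h : ∀ i, cs.IsLeftDescent w i →
      i ∉ cs.supp (cs.simple i * w) ∨ Commute (cs.simple i) w) :
    HasRigidDescents (φ w)⁻¹ := by
  rw [← map_inv]
  refine hφ.hasRigidDescents fun i hi => ?_
  rw [← supp_inv, mul_inv_rev, inv_inv, cs.inv_simple]
  exact (h i (cs.isRightDescent_inv_iff.1 hi)).imp_right Commute.inv_right

theorem exists_nodup_wordProd_eq (hφ : IsAdjacentSwapRep cs φ) (hw : IsCoxeterPattern m (φ w)) :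
    ∃ ω : List (Fin m), ω.Nodup ∧ (∀ i, i ∈ ω) ∧ w = cs.wordProd ω := by
  obtain ⟨ω, hω, hprod⟩ := hw.exists_perm_range_prod_eq
  lift ω to List (Fin m) using fun x hx => List.mem_range.1 (hω.subset hx)
  refine ⟨ω, (hω.symm.nodup List.nodup_range).of_map _, fun i => ?_, hφ.injective ?_⟩
  · exact (List.mem_map_of_injective Fin.val_injective).1
      (hω.symm.subset (List.mem_range.2 i.isLt))
  · rw [hφ.map_wordProd, hprod]

end IsAdjacentSwapRep

end Representation

/-- Let `w ∈ S_n` have full support.  If for every left descent `s` of `w` either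
`s ∉ Supp(sw)` or `sw = ws`, and for every right descent `s` of `w` either
`s ∉ Supp(ws)` or `sw = ws`, then `w` is a Coxeter element. -/
theorem stmt_9 {m : ℕ}
    (cs : CoxeterSystem (CoxeterMatrix.Aₙ m) (Equiv.Perm (Fin (m + 1))))
    (hs : ∀ i : Fin m, cs.simple i = Equiv.swap i.castSucc i.succ)
    (w : Equiv.Perm (Fin (m + 1)))
    (hfull : cs.supp w = Set.univ)
    (hL : ∀ i : Fin m, cs.IsLeftDescent w i →
      i ∉ cs.supp (cs.simple i * w) ∨ cs.simple i * w = w * cs.simple i)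
    (hR : ∀ i : Fin m, cs.IsRightDescent w i →
      i ∉ cs.supp (w * cs.simple i) ∨ cs.simple i * w = w * cs.simple i) :
    ∃ ω : List (Fin m), ω.Nodup ∧ (∀ i : Fin m, i ∈ ω) ∧ w = cs.wordProd ω := by
  have hφ := isAdjacentSwapRep_viaEmbeddingHom cs hs
  have hright := hφ.hasRigidDescents hR
  have hleft := hφ.hasRigidDescents_inv hL
  have hcross (i : ℕ) (hi : i < m) := hφ.exists_crossing (i := ⟨i, hi⟩) (hfull ▸ Set.mem_univ _)
  exact hφ.exists_nodup_wordProd_eq <|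
    isCoxeterPattern_of_hasRigidDescents hright hleft (fun _ => hφ.apply_of_lt w) hcross
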